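/- There is an absolute constant C > 0 with the following property. Let Γ ≤ SL(2,ℝ) be a subgroup, let P ⊆ ℍ² be a finite set of N points, and let Γ₀ ⊆ Γ be a finite subset of cardinality K which is a geodesic cover for P. Then for every t > 0, the number of ordered pairs (p,q) ∈ P × P with d_Γ(p,q) = t is at most C · (K·N)^(4/3). -/

import Mathlib

open scoped UpperHalfPlane MatrixGroups

noncomputable section

/-- The quotient pseudo-distance `d_Γ(p,q) = inf_{γ ∈ Γ} d(p, γ·q)` associated to a
subgroup `Γ ≤ SL(2,ℝ)` acting on the hyperbolic plane. -/
def quotDist (Γ : Subgroup SL(2, ℝ)) (p q : ℍ) : ℝ :=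
  ⨅ γ : Γ, dist p ((γ : SL(2, ℝ)) • q)

/-!
In the upper half-plane, hyperbolic circles of a fixed radius `t` are Euclidean circles, and the
right halves of two of them meet at most once: with the imaginary part as abscissa, the right half
around `a + bi` is the graph of `y ↦ a + √(2 cosh t · b y - b² - y²)`, and the square root is
strictly supermodular in `(b, y)`. So these half-circles are pseudosegments, Székely's
crossing-number argument gives the Szemerédi–Trotter bound for their incidences with points, and `n`
points of `ℍ` span `O(n^{4/3})` pairs at distance `t`. Since all arcs are graphs of functions, the
planar edge bound behind the crossing inequality needs no Euler formula: an edge that is not the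
topmost one at either of its endpoints is the first edge below some vertex, so a plane drawing has
at most three edges per vertex.

Applied directly to the `K N` translates of `P`, the bound for `n` points would lose the
multiplicities with which translates coincide. There are at most `K N / s` translates of
multiplicity at least `s`, so together with `P` they span `O((K N / s)^{4/3})` pairs at distance
`t`, and the sum over the layers `s` converges because `4 / 3 > 1`.
-/

section Sampling

open Finset

variable {α β R : Type*} [DecidableEq α] [CommRing R]

lemma sum_Icc_pow_card_mul_pow {T V : Finset α} (hTV : T ⊆ V) (p : R) :
    ∑ S ∈ Icc T V, p ^ #S * (1 - p) ^ (#V - #S) = p ^ #T := by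
  have disjoint_of_mem {U : Finset α} (hU : U ∈ (V \ T).powerset) : Disjoint T U :=
    disjoint_sdiff.mono_right (mem_powerset.mp hU)
  have union_injOn : Set.InjOn (T ∪ ·) ((V \ T).powerset : Set (Finset α)) := by
    intro U hU U' hU' (hUU' : T ∪ U = T ∪ U')
    rw [← union_sdiff_cancel_left (disjoint_of_mem hU), hUU',
      union_sdiff_cancel_left (disjoint_of_mem hU')]
  rw [Icc_eq_image_powerset hTV, sum_image union_injOn]
  calc ∑ U ∈ (V \ T).powerset, p ^ #(T ∪ U) * (1 - p) ^ (#V - #(T ∪ U))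
      = ∑ U ∈ (V \ T).powerset, p ^ #T * (p ^ #U * (1 - p) ^ (#(V \ T) - #U)) := by
        refine sum_congr rfl fun U hU => ?_
        rw [card_union_of_disjoint (disjoint_of_mem hU), card_sdiff_of_subset hTV, pow_add,
          mul_assoc, Nat.sub_sub]
    _ = p ^ #T := by
        rw [← mul_sum, sum_pow_mul_eq_add_pow, add_sub_cancel, one_pow, mul_one]

-- Keep each vertex of `V` with probability `p`: this is the expected number of surviving sets.
lemma sum_powerset_weight_mul_card_filter_subset {V : Finset α} {A : Finset β}
    {T : β → Finset α} {j : ℕ} (hTV : ∀ b ∈ A, T b ⊆ V) (hTj : ∀ b ∈ A, #(T b) = j) (p : R) :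
    ∑ S ∈ V.powerset, p ^ #S * (1 - p) ^ (#V - #S) * (#{b ∈ A | T b ⊆ S} : R) =
      p ^ j * #A := by
  simp_rw [card_filter, Nat.cast_sum, mul_sum]
  rw [sum_comm, mul_comm, ← nsmul_eq_mul]
  refine sum_eq_card_nsmul fun b hb => ?_
  have supersets_eq_Icc : {S ∈ V.powerset | T b ⊆ S} = Icc (T b) V := by
    ext S
    simp [and_comm]
  simp only [Nat.cast_ite, Nat.cast_one, Nat.cast_zero, mul_ite, mul_one, mul_zero]
  rw [← sum_filter, supersets_eq_Icc, sum_Icc_pow_card_mul_pow (hTV b hb), hTj b hb]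

end Sampling

/-- An arc in the plane that meets every vertical line at most once: the graph of `toFun` over
`[left, right]`. It is empty when `right < left`, and `toFun` is kept on all of `ℝ`, so that an
arc and its sub-arcs share it. -/
@[ext]
structure GraphArc where
  toFun : C(ℝ, ℝ)
  left : ℝ
  right : ℝ

namespace GraphArc

open Finset Topology

instance : CoeFun GraphArc fun _ => ℝ → ℝ := ⟨fun a => a.toFun⟩

instance : Membership (ℝ × ℝ) GraphArc :=
  ⟨fun a v => v.1 ∈ Set.Icc a.left a.right ∧ a v.1 = v.2⟩

/-- The endpoint of an arc with the smaller abscissa. -/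
def leftPt (a : GraphArc) : ℝ × ℝ := (a.left, a a.left)

/-- The endpoint of an arc with the larger abscissa. -/
def rightPt (a : GraphArc) : ℝ × ℝ := (a.right, a a.right)

/-- The two endpoints of an arc, as the vertex set of an edge. -/
def endpoints (a : GraphArc) : Finset (ℝ × ℝ) := {a.leftPt, a.rightPt}

/-- Two arcs cross when they have a common point interior to both. -/
def Cross (a b : GraphArc) : Prop :=
  ∃ x ∈ Set.Ioo a.left a.right ∩ Set.Ioo b.left b.right, a x = b x

/-- The vertical order on arcs, tested at a single abscissa. The left ends are excluded so that
arcs comparable in this sense overlap in an interval; the right ends are allowed. -/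
def Below (a b : GraphArc) : Prop :=
  ∃ x ∈ Set.Ioc a.left a.right ∩ Set.Ioc b.left b.right, a x < b x

open Classical in
/-- The ordered pairs of distinct crossing arcs of a family; both orders are counted. -/
def crossingPairs (E : Finset GraphArc) : Finset (GraphArc × GraphArc) :=
  {z ∈ E.offDiag | Cross z.1 z.2}

/-- A drawing of a simple graph with vertex set `V` and edges `E`: an edge joins two vertices,
contains no further vertex, and is determined by its endpoints. Edges may cross. -/
structure IsDrawing (E : Finset GraphArc) (V : Finset (ℝ × ℝ)) : Prop where
  left_lt_right : ∀ e ∈ E, e.left < e.right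
  leftPt_mem : ∀ e ∈ E, e.leftPt ∈ V
  rightPt_mem : ∀ e ∈ E, e.rightPt ∈ V
  apply_ne : ∀ e ∈ E, ∀ v ∈ V, v.1 ∈ Set.Ioo e.left e.right → e v.1 ≠ v.2
  eq_of_endpoints : ∀ e ∈ E, ∀ g ∈ E, e.leftPt = g.leftPt → e.rightPt = g.rightPt → e = g

/-- A drawing in which no two distinct edges cross. -/
structure IsPlaneDrawing (E : Finset GraphArc) (V : Finset (ℝ × ℝ)) : Prop
    extends IsDrawing E V where
  not_cross : ∀ e ∈ E, ∀ g ∈ E, e ≠ g → ¬ Cross e g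

/-- No edge of `E` lies above `e` among those sharing the vertex `π e`, where `π` selects one of
the two endpoints. -/
def IsTopAt (π : GraphArc → ℝ × ℝ) (E : Finset GraphArc) (e : GraphArc) : Prop :=
  ∀ g ∈ E, π e = π g → ¬ Below e g

/-- The edge `e` is the first one met when moving down vertically from the point `w`. -/
def IsJustBelow (E : Finset GraphArc) (e : GraphArc) (w : ℝ × ℝ) : Prop :=
  w.1 ∈ Set.Ioo e.left e.right ∧ e w.1 < w.2 ∧
    ∀ g ∈ E, w.1 ∈ Set.Ioo g.left g.right → e w.1 < g w.1 → w.2 ≤ g w.1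

/-- The edge `f` is the upper neighbour of `e` in the rotation around the left endpoint of `e`. -/
structure IsNextAbove (E : Finset GraphArc) (e f : GraphArc) : Prop where
  mem : f ∈ E
  leftPt_eq : e.leftPt = f.leftPt
  below : Below e f
  not_between : ∀ g ∈ E, e.leftPt = g.leftPt → Below e g → ¬ Below g f

open Classical in
/-- The vertices above `e` and not above `f`; for `f` next above `e`, those on the boundary of or
beyond the face in the corner between the two. -/
def verticesBetween (V : Finset (ℝ × ℝ)) (e f : GraphArc) : Finset (ℝ × ℝ) :=
  {w ∈ V | w.1 ∈ Set.Ioo e.left e.right ∧ w.1 ≤ f.right ∧ e w.1 < w.2 ∧ w.2 ≤ f w.1}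

section VerticalOrder

variable {a b : GraphArc}

lemma Below.ne (hab : Below a b) : a ≠ b := by
  rintro rfl
  obtain ⟨x, -, hx⟩ := hab
  exact lt_irrefl _ hx

lemma Below.left_lt_right (hab : Below a b) : a.left < b.right := by
  obtain ⟨x, ⟨hxa, hxb⟩, -⟩ := hab
  exact hxa.1.trans_le hxb.2

lemma Below.left_lt_right' (hab : Below a b) : b.left < a.right := by
  obtain ⟨x, ⟨hxa, hxb⟩, -⟩ := hab
  exact hxb.1.trans_le hxa.2

lemma Below.apply_le_apply (hab : Below a b) (hcross : ¬ Cross a b) {y : ℝ}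
    (hya : y ∈ Set.Icc a.left a.right) (hyb : y ∈ Set.Icc b.left b.right) : a y ≤ b y := by
  by_contra! hy
  obtain ⟨x, ⟨hxa, hxb⟩, hx⟩ := hab
  obtain ⟨z, hz, hz_eq⟩ := isPreconnected_uIcc.intermediate_value₂ Set.left_mem_uIcc
    Set.right_mem_uIcc a.toFun.continuous.continuousOn b.toFun.continuous.continuousOn hx.le hy.le
  have hzx : z ≠ x := by rintro rfl; exact hx.ne hz_eq
  have hzy : z ≠ y := by rintro rfl; exact hy.ne' hz_eq
  refine hcross ⟨z, ?_, hz_eq⟩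
  simp only [Set.mem_inter_iff, Set.mem_Ioo, Set.mem_Ioc, Set.mem_Icc, Set.mem_uIcc] at *
  rcases lt_or_gt_of_ne hzx with hzx | hzx <;> rcases lt_or_gt_of_ne hzy with hzy | hzy <;> grind

lemma below_or_below {x : ℝ} (hxa : x ∈ Set.Ioo a.left a.right)
    (hxb : x ∈ Set.Ioo b.left b.right) (hcross : ¬ Cross a b) : Below a b ∨ Below b a := by
  have hne : a x ≠ b x := fun hx => hcross ⟨x, ⟨hxa, hxb⟩, hx⟩
  have hxa' := Set.Ioo_subset_Ioc_self hxa
  have hxb' := Set.Ioo_subset_Ioc_self hxb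
  exact hne.lt_or_gt.imp (fun hx => ⟨x, ⟨hxa', hxb'⟩, hx⟩) fun hx => ⟨x, ⟨hxb', hxa'⟩, hx⟩

lemma below_or_below_of_leftPt_eq (ha : a.left < a.right) (hb : b.left < b.right)
    (h : a.leftPt = b.leftPt) (hcross : ¬ Cross a b) : Below a b ∨ Below b a := by
  have hleft : a.left = b.left := congrArg Prod.fst h
  obtain ⟨x, hx, hx'⟩ := exists_between (lt_min ha (hleft ▸ hb))
  rw [lt_min_iff] at hx'
  exact below_or_below ⟨hx, hx'.1⟩ ⟨hleft ▸ hx, hx'.2⟩ hcross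

lemma below_or_below_of_rightPt_eq (ha : a.left < a.right) (hb : b.left < b.right)
    (h : a.rightPt = b.rightPt) (hcross : ¬ Cross a b) : Below a b ∨ Below b a := by
  have hright : a.right = b.right := congrArg Prod.fst h
  obtain ⟨x, hx, hx'⟩ := exists_between (max_lt ha (hright ▸ hb))
  rw [max_lt_iff] at hx
  exact below_or_below ⟨hx.1, hx'⟩ ⟨hx.2, hright ▸ hx'⟩ hcross

end VerticalOrder

section Planar

variable {E : Finset GraphArc} {V : Finset (ℝ × ℝ)} {e f g : GraphArc}

lemma IsNextAbove.left_eq (hf : IsNextAbove E e f) : e.left = f.left :=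
  congrArg Prod.fst hf.leftPt_eq

open Classical in
lemma card_filter_isTopAt_le {π : GraphArc → ℝ × ℝ} (hπ : ∀ e ∈ E, π e ∈ V)
    (hbelow : ∀ e ∈ E, ∀ g ∈ E, e ≠ g → π e = π g → Below e g ∨ Below g e) :
    #{e ∈ E | IsTopAt π E e} ≤ #V := by
  refine card_le_card_of_injOn π (fun e he => hπ e (mem_filter.mp he).1) ?_
  intro e he g hg heg
  obtain ⟨he, he_top⟩ := mem_filter.mp he
  obtain ⟨hg, hg_top⟩ := mem_filter.mp hg
  by_contra hne
  rcases hbelow e he g hg hne heg with h | h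
  exacts [he_top g hg heg h, hg_top e he heg.symm h]

namespace IsPlaneDrawing

variable (h : IsPlaneDrawing E V)
include h

open Classical in
lemma card_filter_isJustBelow_le : #{e ∈ E | ∃ w ∈ V, IsJustBelow E e w} ≤ #V := by
  refine card_le_card_of_forall_subsingleton (IsJustBelow E)
    (fun e he => (mem_filter.mp he).2) fun w _ e he g hg => ?_
  obtain ⟨he, hwe, he_lt, he_max⟩ := he
  obtain ⟨hg, hwg, hg_lt, hg_max⟩ := hg
  by_contra hne
  have happly : e w.1 ≠ g w.1 := fun heq => h.not_cross e (mem_filter.mp he).1 g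
    (mem_filter.mp hg).1 hne ⟨w.1, ⟨hwe, hwg⟩, heq⟩
  rcases happly.lt_or_gt with hlt | hlt
  · exact hg_lt.not_ge (he_max g (mem_filter.mp hg).1 hwg hlt)
  · exact he_lt.not_ge (hg_max e (mem_filter.mp he).1 hwe hlt)

lemma apply_le_apply (he : e ∈ E) (hg : g ∈ E) (heg : Below e g) {x : ℝ}
    (hxe : x ∈ Set.Icc e.left e.right) (hxg : x ∈ Set.Icc g.left g.right) : e x ≤ g x :=
  heg.apply_le_apply (h.not_cross e he g hg heg.ne) hxe hxg

lemma exists_isNextAbove (htop : ¬ IsTopAt leftPt E e) :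
    ∃ f, IsNextAbove E e f := by
  classical
  let above : Finset GraphArc := {g ∈ E | e.leftPt = g.leftPt ∧ Below e g}
  have habove : above.Nonempty := by
    simp only [IsTopAt, not_forall, not_not] at htop
    obtain ⟨g, hg, heg, hbelow⟩ := htop
    exact ⟨g, mem_filter.mpr ⟨hg, heg, hbelow⟩⟩
  obtain ⟨x, hx⟩ : ∃ x, ∀ g ∈ above, x ∈ Set.Ioo g.left g.right := by
    refine ((Filter.eventually_all_finset (l := 𝓝[>] e.left) above).mpr fun g hg => ?_).exists
    obtain ⟨hg, heg, -⟩ := mem_filter.mp hg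
    rw [show e.left = g.left from congrArg Prod.fst heg]
    exact Ioo_mem_nhdsGT (h.left_lt_right g hg)
  obtain ⟨f, hf, hf_min⟩ := exists_min_image above (fun g => g x) habove
  obtain ⟨hfE, hef, hbelow⟩ := mem_filter.mp hf
  refine ⟨f, hfE, hef, hbelow, fun g hg heg heg_below hgf => ?_⟩
  have hg' : g ∈ above := mem_filter.mpr ⟨hg, heg, heg_below⟩
  have hgf_le : g x ≤ f x := h.apply_le_apply hg hfE hgf (Set.Ioo_subset_Icc_self (hx g hg'))
    (Set.Ioo_subset_Icc_self (hx f hf))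
  exact h.not_cross g hg f hfE hgf.ne ⟨x, ⟨hx g hg', hx f hf⟩, hgf_le.antisymm (hf_min g hg')⟩

lemma left_lt_left_of_between (he : e ∈ E) (hf : IsNextAbove E e f) (hg : g ∈ E)
    (heg : Below e g) (hgf : Below g f) : e.left < g.left := by
  by_contra! hle
  have hleft : e.left = f.left := hf.left_eq
  have hmem_g : e.left ∈ Set.Icc g.left g.right := ⟨hle, heg.left_lt_right.le⟩
  have hmem_f : e.left ∈ Set.Icc f.left f.right :=
    ⟨hleft.ge, hleft ▸ (h.left_lt_right f hf.mem).le⟩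
  have hg_apply : g e.left = e e.left := by
    refine le_antisymm ?_
      (h.apply_le_apply he hg heg ⟨le_rfl, (h.left_lt_right e he).le⟩ hmem_g)
    calc g e.left ≤ f e.left := h.apply_le_apply hg hf.mem hgf hmem_g hmem_f
      _ = f f.left := by rw [hleft]
      _ = e e.left := (congrArg Prod.snd hf.leftPt_eq).symm
  rcases hle.lt_or_eq with hlt | heq
  · exact h.apply_ne g hg e.leftPt (h.leftPt_mem e he) ⟨hlt, heg.left_lt_right⟩ hg_apply
  · refine hf.not_between g hg (Prod.ext heq.symm ?_) heg hgf
    exact hg_apply.symm.trans (congrArg g heq.symm)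

lemma leftPt_mem_verticesBetween (he : e ∈ E) (hf : IsNextAbove E e f) (hg : g ∈ E)
    (heg : Below e g) (hgf : Below g f) : g.leftPt ∈ verticesBetween V e f := by
  have hlt : e.left < g.left := h.left_lt_left_of_between he hf hg heg hgf
  have hmem_e : g.left ∈ Set.Ioo e.left e.right := ⟨hlt, heg.left_lt_right'⟩
  have hmem_g : g.left ∈ Set.Icc g.left g.right := ⟨le_rfl, (h.left_lt_right g hg).le⟩
  have hmem_f : g.left ∈ Set.Icc f.left f.right :=
    ⟨hf.left_eq ▸ hlt.le, hgf.left_lt_right.le⟩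
  refine mem_filter.mpr ⟨h.leftPt_mem g hg, hmem_e, hmem_f.2, ?_,
    h.apply_le_apply hg hf.mem hgf hmem_g hmem_f⟩
  exact (h.apply_le_apply he hg heg (Set.Ioo_subset_Icc_self hmem_e) hmem_g).lt_of_ne
    (h.apply_ne e he g.leftPt (h.leftPt_mem g hg) hmem_e)

lemma rightPt_mem_verticesBetween (he : e ∈ E) (hf : IsNextAbove E e f)
    (hright : f.right < e.right) : f.rightPt ∈ verticesBetween V e f := by
  have hleft : e.left = f.left := hf.left_eq
  have hlt : f.left < f.right := h.left_lt_right f hf.mem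
  have hmem_e : f.right ∈ Set.Ioo e.left e.right := ⟨hleft ▸ hlt, hright⟩
  refine mem_filter.mpr ⟨h.rightPt_mem f hf.mem, hmem_e, le_rfl, ?_, le_rfl⟩
  exact (h.apply_le_apply he hf.mem hf.below (Set.Ioo_subset_Icc_self hmem_e)
    ⟨hlt.le, le_rfl⟩).lt_of_ne (h.apply_ne e he f.rightPt (h.rightPt_mem f hf.mem) hmem_e)

lemma apply_right_lt_apply_right (he : e ∈ E) (hf : IsNextAbove E e f)
    (hright : e.right ≤ f.right) : e e.right < f e.right := by
  have hleft : e.left = f.left := hf.left_eq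
  have hlt : e.left < e.right := h.left_lt_right e he
  refine (h.apply_le_apply he hf.mem hf.below ⟨hlt.le, le_rfl⟩
    ⟨hleft ▸ hlt.le, hright⟩).lt_of_ne fun heq => ?_
  rcases hright.lt_or_eq with hlt' | heq'
  · exact h.apply_ne f hf.mem e.rightPt (h.rightPt_mem e he) ⟨hleft ▸ hlt, hlt'⟩ heq.symm
  · refine hf.below.ne (h.eq_of_endpoints e he f hf.mem hf.leftPt_eq (Prod.ext heq' ?_))
    exact heq.trans (congrArg f heq')

lemma verticesBetween_nonempty (he : e ∈ E) (hf : IsNextAbove E e f)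
    (htop : ¬ IsTopAt rightPt E e) : (verticesBetween V e f).Nonempty := by
  rcases lt_or_ge f.right e.right with hright | hright
  · exact ⟨_, h.rightPt_mem_verticesBetween he hf hright⟩
  simp only [IsTopAt, not_forall, not_not] at htop
  obtain ⟨g, hg, heg, hbelow⟩ := htop
  have hright_eq : e.right = g.right := congrArg Prod.fst heg
  have hg_lt : g e.right < f e.right := by
    calc g e.right = g g.right := congrArg g hright_eq
      _ = e e.right := (congrArg Prod.snd heg).symm
      _ < f e.right := h.apply_right_lt_apply_right he hf hright
  have hleft_lt : f.left < e.right := by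
    rw [← hf.left_eq]
    exact h.left_lt_right e he
  have hgf : Below g f := ⟨e.right,
    ⟨⟨hbelow.left_lt_right', hright_eq.le⟩, ⟨hleft_lt, hright⟩⟩, hg_lt⟩
  exact ⟨_, h.leftPt_mem_verticesBetween he hf hg hbelow hgf⟩

-- The leftmost vertex in the corner between `e` and `f` works: an edge separating it from `e`
-- would have its left endpoint in the corner, further to the left.
lemma exists_isJustBelow (he : e ∈ E) (hf : IsNextAbove E e f)
    (hne : (verticesBetween V e f).Nonempty) : ∃ w ∈ V, IsJustBelow E e w := by
  obtain ⟨w, hw, hw_min⟩ := exists_min_image _ Prod.fst hne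
  obtain ⟨hwV, hwe, hwf, he_lt, hf_ge⟩ := mem_filter.mp hw
  refine ⟨w, hwV, hwe, he_lt, fun g hg hwg heg => ?_⟩
  by_contra! hgw
  have hf_left : f.left < w.1 := hf.left_eq ▸ hwe.1
  have hwg' : w.1 ∈ Set.Ioc g.left g.right := Set.Ioo_subset_Ioc_self hwg
  have hbelow_eg : Below e g := ⟨w.1, ⟨Set.Ioo_subset_Ioc_self hwe, hwg'⟩, heg⟩
  have hbelow_gf : Below g f := ⟨w.1, ⟨hwg', hf_left, hwf⟩, hgw.trans_le hf_ge⟩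
  exact hwg.1.not_ge (hw_min _ (h.leftPt_mem_verticesBetween he hf hg hbelow_eg hbelow_gf))

theorem card_edges_le : #E ≤ 3 * #V := by
  classical
  have hcover : E ⊆ {e ∈ E | IsTopAt leftPt E e} ∪ {e ∈ E | IsTopAt rightPt E e} ∪
      {e ∈ E | ∃ w ∈ V, IsJustBelow E e w} := by
    intro e he
    by_cases hleft : IsTopAt leftPt E e
    · simp [he, hleft]
    by_cases hright : IsTopAt rightPt E e
    · simp [he, hright]
    obtain ⟨f, hf⟩ := h.exists_isNextAbove hleft
    have hsees := h.exists_isJustBelow he hf (h.verticesBetween_nonempty he hf hright)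
    exact mem_union_right _ (mem_filter.mpr ⟨he, hsees⟩)
  have hleft_card : #{e ∈ E | IsTopAt leftPt E e} ≤ #V :=
    card_filter_isTopAt_le h.leftPt_mem fun e he g hg hne heq =>
      below_or_below_of_leftPt_eq (h.left_lt_right e he) (h.left_lt_right g hg) heq
        (h.not_cross e he g hg hne)
  have hright_card : #{e ∈ E | IsTopAt rightPt E e} ≤ #V :=
    card_filter_isTopAt_le h.rightPt_mem fun e he g hg hne heq =>
      below_or_below_of_rightPt_eq (h.left_lt_right e he) (h.left_lt_right g hg) heq
        (h.not_cross e he g hg hne)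
  grw [card_le_card hcover, card_union_le, card_union_le, hleft_card, hright_card,
    h.card_filter_isJustBelow_le]
  omega

end IsPlaneDrawing

end Planar

section Crossing

variable {E : Finset GraphArc} {V : Finset (ℝ × ℝ)} {e : GraphArc}

lemma endpoints_subset_iff {S : Finset (ℝ × ℝ)} :
    e.endpoints ⊆ S ↔ e.leftPt ∈ S ∧ e.rightPt ∈ S := by
  simp [endpoints, insert_subset_iff]

lemma card_endpoints (he : e.left < e.right) : #e.endpoints = 2 :=
  card_pair fun h => he.ne (congrArg Prod.fst h)

lemma IsDrawing.endpoints_subset (h : IsDrawing E V) (he : e ∈ E) : e.endpoints ⊆ V :=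
  endpoints_subset_iff.mpr ⟨h.leftPt_mem e he, h.rightPt_mem e he⟩

lemma IsDrawing.mono (h : IsDrawing E V) {E' : Finset GraphArc} {V' : Finset (ℝ × ℝ)}
    (hE : E' ⊆ E) (hV : V' ⊆ V) (hend : ∀ e ∈ E', e.endpoints ⊆ V') : IsDrawing E' V' where
  left_lt_right e he := h.left_lt_right e (hE he)
  leftPt_mem e he := (endpoints_subset_iff.mp (hend e he)).1
  rightPt_mem e he := (endpoints_subset_iff.mp (hend e he)).2
  apply_ne e he v hv := h.apply_ne e (hE he) v (hV hv)
  eq_of_endpoints e he g hg := h.eq_of_endpoints e (hE he) g (hE hg)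

theorem IsDrawing.card_edges_le (h : IsDrawing E V) : #E ≤ 3 * #V + #(crossingPairs E) := by
  classical
  let crossed : Finset GraphArc := (crossingPairs E).image Prod.fst
  have hplane : IsPlaneDrawing (E \ crossed) V :=
    { h.mono sdiff_subset subset_rfl fun e he => h.endpoints_subset (mem_sdiff.mp he).1 with
      not_cross := by
        intro e he g hg hne hcross
        obtain ⟨he, he_uncrossed⟩ := mem_sdiff.mp he
        have hpair : (e, g) ∈ crossingPairs E :=
          mem_filter.mpr ⟨mem_offDiag.mpr ⟨he, (mem_sdiff.mp hg).1, hne⟩, hcross⟩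
        exact he_uncrossed (mem_image_of_mem Prod.fst hpair) }
  calc #E ≤ #(E \ crossed) + #crossed := card_le_card_sdiff_add_card
    _ ≤ 3 * #V + #(crossingPairs E) := add_le_add hplane.card_edges_le card_image_le

lemma IsDrawing.card_filter_endpoints_subset_le (h : IsDrawing E V) {S : Finset (ℝ × ℝ)}
    (hS : S ⊆ V) :
    #{e ∈ E | e.endpoints ⊆ S} ≤ 3 * #{v ∈ V | {v} ⊆ S} +
      #{z ∈ crossingPairs E | z.1.endpoints ∪ z.2.endpoints ⊆ S} := by
  classical
  have hV : {v ∈ V | {v} ⊆ S} = S := by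
    ext v
    simpa using fun hv => hS hv
  have hsub : IsDrawing {e ∈ E | e.endpoints ⊆ S} S :=
    h.mono (filter_subset _ _) hS fun e he => (mem_filter.mp he).2
  have hcross : crossingPairs {e ∈ E | e.endpoints ⊆ S} ⊆
      {z ∈ crossingPairs E | z.1.endpoints ∪ z.2.endpoints ⊆ S} := by
    intro z hz
    simp only [crossingPairs, mem_filter, mem_offDiag, union_subset_iff] at hz ⊢
    tauto
  rw [hV]
  grw [hsub.card_edges_le, card_le_card hcross]

theorem IsDrawing.crossing_inequality (h : IsDrawing E V)
    (hdisj : ∀ z ∈ crossingPairs E, Disjoint z.1.endpoints z.2.endpoints) {p : ℝ}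
    (hp₀ : 0 ≤ p) (hp₁ : p ≤ 1) :
    p ^ 2 * #E ≤ 3 * p * #V + p ^ 4 * #(crossingPairs E) := by
  classical
  have mem_of_pair {z : GraphArc × GraphArc} (hz : z ∈ crossingPairs E) : z.1 ∈ E ∧ z.2 ∈ E := by
    obtain ⟨hz₁, hz₂, -⟩ := mem_offDiag.mp (mem_filter.mp hz).1
    exact ⟨hz₁, hz₂⟩
  have hcard_pair : ∀ z ∈ crossingPairs E, #(z.1.endpoints ∪ z.2.endpoints) = 4 := by
    intro z hz
    rw [card_union_of_disjoint (hdisj z hz), card_endpoints (h.left_lt_right _ (mem_of_pair hz).1),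
      card_endpoints (h.left_lt_right _ (mem_of_pair hz).2)]
  have hpair_subset : ∀ z ∈ crossingPairs E, z.1.endpoints ∪ z.2.endpoints ⊆ V := fun z hz =>
    union_subset (h.endpoints_subset (mem_of_pair hz).1) (h.endpoints_subset (mem_of_pair hz).2)
  let weight (S : Finset (ℝ × ℝ)) : ℝ := p ^ #S * (1 - p) ^ (#V - #S)
  have hweight (S : Finset (ℝ × ℝ)) : 0 ≤ weight S :=
    mul_nonneg (pow_nonneg hp₀ _) (pow_nonneg (sub_nonneg.mpr hp₁) _)
  calc p ^ 2 * #E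
      = ∑ S ∈ V.powerset, weight S * #{e ∈ E | e.endpoints ⊆ S} :=
        (sum_powerset_weight_mul_card_filter_subset (fun e he => h.endpoints_subset he)
          (fun e he => card_endpoints (h.left_lt_right e he)) p).symm
    _ ≤ ∑ S ∈ V.powerset, weight S * (3 * #{v ∈ V | {v} ⊆ S} +
          #{z ∈ crossingPairs E | z.1.endpoints ∪ z.2.endpoints ⊆ S}) := by
        refine sum_le_sum fun S hS => mul_le_mul_of_nonneg_left ?_ (hweight S)
        exact_mod_cast h.card_filter_endpoints_subset_le (mem_powerset.mp hS)
    _ = 3 * ∑ S ∈ V.powerset, weight S * #{v ∈ V | {v} ⊆ S} + ∑ S ∈ V.powerset,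
          weight S * #{z ∈ crossingPairs E | z.1.endpoints ∪ z.2.endpoints ⊆ S} := by
        rw [mul_sum, ← sum_add_distrib]
        exact sum_congr rfl fun S _ => by ring
    _ = 3 * p * #V + p ^ 4 * #(crossingPairs E) := by
        rw [sum_powerset_weight_mul_card_filter_subset (fun v hv => singleton_subset_iff.mpr hv)
          (fun v _ => card_singleton v), sum_powerset_weight_mul_card_filter_subset hpair_subset
          hcard_pair]
        ring

end Crossing

/-- The arcs of `A` are pseudosegments: two distinct ones have at most one point in common. -/
def IsPseudosegments (A : Finset GraphArc) : Prop :=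
  (A : Set GraphArc).Pairwise fun a b => {v | v ∈ a ∧ v ∈ b}.Subsingleton

open Classical in
/-- The pairs of an arc of `A` and a point of `V` on it. -/
def incidences (A : Finset GraphArc) (V : Finset (ℝ × ℝ)) : Finset (GraphArc × (ℝ × ℝ)) :=
  {z ∈ A ×ˢ V | z.2 ∈ z.1}

/-- The arc `e` is the piece of `a` between two consecutive points of `V` on `a`. -/
structure IsPiece (V : Finset (ℝ × ℝ)) (a e : GraphArc) : Prop where
  toFun_eq : e.toFun = a.toFun
  left_le_left : a.left ≤ e.left
  left_lt_right : e.left < e.right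
  right_le_right : e.right ≤ a.right
  leftPt_mem : e.leftPt ∈ V
  rightPt_mem : e.rightPt ∈ V
  notMem_Ioo : ∀ w ∈ V, w ∈ a → w.1 ∉ Set.Ioo e.left e.right

open Classical in
/-- The edges of the Szemerédi–Trotter graph: the pieces into which `V` cuts the arcs of `A`. -/
def pieces (A : Finset GraphArc) (V : Finset (ℝ × ℝ)) : Finset GraphArc :=
  {e ∈ (A ×ˢ V ×ˢ V).image fun z => ⟨z.1.toFun, z.2.1.1, z.2.2.1⟩ | ∃ a ∈ A, IsPiece V a e}

section Incidence

variable {A : Finset GraphArc} {V : Finset (ℝ × ℝ)} {a b e g : GraphArc}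

lemma mem_pieces : e ∈ pieces A V ↔ ∃ a ∈ A, IsPiece V a e := by
  classical
  refine ⟨fun he => (mem_filter.mp he).2, fun ⟨a, ha, hae⟩ => mem_filter.mpr ⟨?_, a, ha, hae⟩⟩
  refine mem_image.mpr ⟨(a, e.leftPt, e.rightPt), ?_, ?_⟩
  · simp [ha, hae.leftPt_mem, hae.rightPt_mem]
  · exact GraphArc.ext hae.toFun_eq.symm rfl rfl

lemma IsPiece.mem_of_mem (hae : IsPiece V a e) {v : ℝ × ℝ} (hv : v ∈ e) : v ∈ a :=
  ⟨⟨hae.left_le_left.trans hv.1.1, hv.1.2.trans hae.right_le_right⟩, hae.toFun_eq ▸ hv.2⟩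

lemma leftPt_mem_self (he : e.left < e.right) : e.leftPt ∈ e := ⟨⟨le_rfl, he.le⟩, rfl⟩

lemma rightPt_mem_self (he : e.left < e.right) : e.rightPt ∈ e := ⟨⟨he.le, le_rfl⟩, rfl⟩

lemma mem_of_mem_endpoints (he : e.left < e.right) {v : ℝ × ℝ} (hv : v ∈ e.endpoints) :
    v ∈ e := by
  rcases mem_insert.mp hv with rfl | hv
  · exact leftPt_mem_self he
  · exact mem_singleton.mp hv ▸ rightPt_mem_self he

lemma fst_notMem_Ioo_of_mem_endpoints {v : ℝ × ℝ} (hv : v ∈ e.endpoints) :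
    v.1 ∉ Set.Ioo e.left e.right := by
  rcases mem_insert.mp hv with rfl | hv
  · simp [leftPt]
  · simp [mem_singleton.mp hv, rightPt]

lemma IsPiece.eq_of_mem_Ioo (hae : IsPiece V a e) (hag : IsPiece V a g) {x : ℝ}
    (hxe : x ∈ Set.Ioo e.left e.right) (hxg : x ∈ Set.Ioo g.left g.right) : e = g := by
  have leftPt_mem {c : GraphArc} (hac : IsPiece V a c) : c.leftPt ∈ a :=
    hac.mem_of_mem (leftPt_mem_self hac.left_lt_right)
  have rightPt_mem {c : GraphArc} (hac : IsPiece V a c) : c.rightPt ∈ a :=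
    hac.mem_of_mem (rightPt_mem_self hac.left_lt_right)
  refine GraphArc.ext (hae.toFun_eq.trans hag.toFun_eq.symm) ?_ ?_
  · rcases lt_trichotomy e.left g.left with hlt | heq | hlt
    · exact absurd ⟨hlt, hxg.1.trans hxe.2⟩
        (hae.notMem_Ioo _ hag.leftPt_mem (leftPt_mem hag))
    · exact heq
    · exact absurd ⟨hlt, hxe.1.trans hxg.2⟩
        (hag.notMem_Ioo _ hae.leftPt_mem (leftPt_mem hae))
  · rcases lt_trichotomy e.right g.right with hlt | heq | hlt
    · exact absurd ⟨hxg.1.trans hxe.2, hlt⟩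
        (hag.notMem_Ioo _ hae.rightPt_mem (rightPt_mem hae))
    · exact heq
    · exact absurd ⟨hxe.1.trans hxg.2, hlt⟩
        (hae.notMem_Ioo _ hag.rightPt_mem (rightPt_mem hag))

lemma IsPseudosegments.eq_of_leftPt_of_rightPt (hA : IsPseudosegments A) (ha : a ∈ A)
    (hb : b ∈ A) (hae : IsPiece V a e) (hbg : IsPiece V b g) (hleft : e.leftPt = g.leftPt)
    (hright : e.rightPt = g.rightPt) : a = b := by
  by_contra hne
  have hleft_mem : e.leftPt ∈ a ∧ e.leftPt ∈ b :=
    ⟨hae.mem_of_mem (leftPt_mem_self hae.left_lt_right),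
      hleft ▸ hbg.mem_of_mem (leftPt_mem_self hbg.left_lt_right)⟩
  have hright_mem : e.rightPt ∈ a ∧ e.rightPt ∈ b :=
    ⟨hae.mem_of_mem (rightPt_mem_self hae.left_lt_right),
      hright ▸ hbg.mem_of_mem (rightPt_mem_self hbg.left_lt_right)⟩
  exact hae.left_lt_right.ne (congrArg Prod.fst (hA ha hb hne hleft_mem hright_mem))

lemma IsPseudosegments.isDrawing_pieces (hA : IsPseudosegments A) :
    IsDrawing (pieces A V) V where
  left_lt_right e he := (mem_pieces.mp he).elim fun _ h => h.2.left_lt_right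
  leftPt_mem e he := (mem_pieces.mp he).elim fun _ h => h.2.leftPt_mem
  rightPt_mem e he := (mem_pieces.mp he).elim fun _ h => h.2.rightPt_mem
  apply_ne e he v hv hve heq := by
    obtain ⟨a, -, hae⟩ := mem_pieces.mp he
    exact hae.notMem_Ioo v hv (hae.mem_of_mem ⟨Set.Ioo_subset_Icc_self hve, heq⟩) hve
  eq_of_endpoints e he g hg hleft hright := by
    obtain ⟨a, ha, hae⟩ := mem_pieces.mp he
    obtain ⟨b, hb, hbg⟩ := mem_pieces.mp hg
    obtain rfl := hA.eq_of_leftPt_of_rightPt ha hb hae hbg hleft hright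
    exact GraphArc.ext (hae.toFun_eq.trans hbg.toFun_eq.symm) (congrArg Prod.fst hleft)
      (congrArg Prod.fst hright)

-- A crossing of two pieces is the unique common point of the two arcs that carry them.
lemma IsPseudosegments.exists_crossing (hA : IsPseudosegments A) (ha : a ∈ A) (hb : b ∈ A)
    (hae : IsPiece V a e) (hbg : IsPiece V b g) (hne : e ≠ g) (hcross : Cross e g) :
    ∃ u : ℝ × ℝ, u.1 ∈ Set.Ioo e.left e.right ∧ u.1 ∈ Set.Ioo g.left g.right ∧
      u ∈ a ∧ u ∈ b ∧ ∀ v, v ∈ a → v ∈ b → v = u := by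
  obtain ⟨x, ⟨hxe, hxg⟩, hx⟩ := hcross
  have hab : a ≠ b := by
    rintro rfl
    exact hne (hae.eq_of_mem_Ioo hbg hxe hxg)
  have hua : (x, e x) ∈ a := hae.mem_of_mem ⟨Set.Ioo_subset_Icc_self hxe, rfl⟩
  have hub : (x, e x) ∈ b := hbg.mem_of_mem ⟨Set.Ioo_subset_Icc_self hxg, hx.symm⟩
  exact ⟨(x, e x), hxe, hxg, hua, hub, fun v hva hvb => hA ha hb hab ⟨hva, hvb⟩ ⟨hua, hub⟩⟩

lemma mem_crossingPairs_pieces {z : GraphArc × GraphArc} (hz : z ∈ crossingPairs (pieces A V)) :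
    z.1 ≠ z.2 ∧ Cross z.1 z.2 ∧ (∃ a ∈ A, IsPiece V a z.1) ∧ ∃ b ∈ A, IsPiece V b z.2 := by
  classical
  obtain ⟨hz, hcross⟩ := mem_filter.mp hz
  obtain ⟨hz₁, hz₂, hne⟩ := mem_offDiag.mp hz
  exact ⟨hne, hcross, mem_pieces.mp hz₁, mem_pieces.mp hz₂⟩

lemma IsPseudosegments.disjoint_endpoints (hA : IsPseudosegments A) :
    ∀ z ∈ crossingPairs (pieces A V), Disjoint z.1.endpoints z.2.endpoints := by
  intro z hz
  obtain ⟨hne, hcross, ⟨a, ha, hae⟩, ⟨b, hb, hbg⟩⟩ := mem_crossingPairs_pieces hz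
  obtain ⟨u, hue, -, -, -, hu_unique⟩ := hA.exists_crossing ha hb hae hbg hne hcross
  refine disjoint_left.mpr fun v hve hvg => fst_notMem_Ioo_of_mem_endpoints hve ?_
  rwa [hu_unique v (hae.mem_of_mem (mem_of_mem_endpoints hae.left_lt_right hve))
    (hbg.mem_of_mem (mem_of_mem_endpoints hbg.left_lt_right hvg))]

lemma IsPseudosegments.card_crossingPairs_le (hA : IsPseudosegments A) :
    #(crossingPairs (pieces A V)) ≤ #A ^ 2 := by
  rw [sq, ← card_product]
  refine card_le_card_of_forall_subsingleton
    (fun z c => IsPiece V c.1 z.1 ∧ IsPiece V c.2 z.2) (fun z hz => ?_) ?_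
  · obtain ⟨-, -, ⟨a, ha, hae⟩, ⟨b, hb, hbg⟩⟩ := mem_crossingPairs_pieces hz
    exact ⟨(a, b), mem_product.mpr ⟨ha, hb⟩, hae, hbg⟩
  · rintro ⟨a, b⟩ hab z ⟨hz, hz₁, hz₂⟩ z' ⟨hz', hz₁', hz₂'⟩
    obtain ⟨ha, hb⟩ := mem_product.mp hab
    obtain ⟨hne, hcross, -⟩ := mem_crossingPairs_pieces hz
    obtain ⟨hne', hcross', -⟩ := mem_crossingPairs_pieces hz'
    obtain ⟨u, hu₁, hu₂, -, -, hu_unique⟩ := hA.exists_crossing ha hb hz₁ hz₂ hne hcross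
    obtain ⟨u', hu₁', hu₂', hua', hub', -⟩ := hA.exists_crossing ha hb hz₁' hz₂' hne' hcross'
    obtain rfl := hu_unique u' hua' hub'
    exact Prod.ext (hz₁.eq_of_mem_Ioo hz₁' hu₁ hu₁') (hz₂.eq_of_mem_Ioo hz₂' hu₂ hu₂')

lemma exists_isPiece_leftPt_eq {u w : ℝ × ℝ} (hu : u ∈ V) (hua : u ∈ a) (hw : w ∈ V)
    (hwa : w ∈ a) (huw : u.1 < w.1) : ∃ e, IsPiece V a e ∧ e.leftPt = u := by
  classical
  obtain ⟨v, hv, hv_min⟩ := exists_min_image {w ∈ V | w ∈ a ∧ u.1 < w.1} Prod.fst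
    ⟨w, mem_filter.mpr ⟨hw, hwa, huw⟩⟩
  obtain ⟨hv, hva, huv⟩ := mem_filter.mp hv
  have hleft : GraphArc.leftPt ⟨a.toFun, u.1, v.1⟩ = u := Prod.ext rfl hua.2
  have hright : GraphArc.rightPt ⟨a.toFun, u.1, v.1⟩ = v := Prod.ext rfl hva.2
  refine ⟨⟨a.toFun, u.1, v.1⟩, ⟨rfl, hua.1.1, huv, hva.1.2, hleft ▸ hu, hright ▸ hv, ?_⟩, hleft⟩
  exact fun x hx hxa hux => hux.2.not_ge (hv_min x (mem_filter.mpr ⟨hx, hxa, hux.1⟩))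

-- Every incidence is the left end of a piece, except for the last point on each arc.
lemma IsPseudosegments.card_incidences_le_card_pieces (hA : IsPseudosegments A) :
    #(incidences A V) ≤ #(pieces A V) + #A := by
  classical
  let HasNext (z : GraphArc × (ℝ × ℝ)) : Prop := ∃ w ∈ V, w ∈ z.1 ∧ z.2.1 < w.1
  rw [← card_filter_add_card_filter_not (s := incidences A V) HasNext]
  refine add_le_add ?_ ?_
  · refine card_le_card_of_forall_subsingleton
      (fun z e => IsPiece V z.1 e ∧ e.leftPt = z.2) (fun z hz => ?_) ?_
    · obtain ⟨hz, w, hw, hwz, hlt⟩ := mem_filter.mp hz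
      obtain ⟨hz, hmem⟩ := mem_filter.mp hz
      obtain ⟨e, hze, hleft⟩ :=
        exists_isPiece_leftPt_eq (mem_product.mp hz).2 hmem hw hwz hlt
      exact ⟨e, mem_pieces.mpr ⟨z.1, (mem_product.mp hz).1, hze⟩, hze, hleft⟩
    · have arc_mem {z} (hz : z ∈ {z ∈ incidences A V | HasNext z}) : z.1 ∈ A :=
        (mem_product.mp (mem_filter.mp (mem_filter.mp hz).1).1).1
      rintro e - z ⟨hz, hze, hleft⟩ z' ⟨hz', hze', hleft'⟩
      exact Prod.ext (hA.eq_of_leftPt_of_rightPt (arc_mem hz) (arc_mem hz') hze hze' rfl rfl)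
        (hleft.symm.trans hleft')
  · refine card_le_card_of_injOn Prod.fst
      (fun z hz => (mem_product.mp (mem_filter.mp (mem_filter.mp hz).1).1).1) ?_
    rintro ⟨a, u⟩ hu ⟨a', v⟩ hv (rfl : a = a')
    simp only [mem_coe, mem_filter, incidences, mem_product, HasNext, not_exists, not_and,
      not_lt] at hu hv
    obtain ⟨⟨⟨-, huV⟩, hua⟩, hu_last⟩ := hu
    obtain ⟨⟨⟨-, hvV⟩, hva⟩, hv_last⟩ := hv
    have huv : u.1 = v.1 := (hv_last u huV hua).antisymm (hu_last v hvV hva)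
    exact Prod.ext rfl (Prod.ext huv (hua.2.symm.trans ((congrArg a huv).trans hva.2)))

lemma IsPseudosegments.card_incidences_le_of_mem_Ioc (hA : IsPseudosegments A) {p : ℝ}
    (hp : p ∈ Set.Ioc 0 1) :
    (#(incidences A V) : ℝ) ≤ #A + 3 * #V / p + p ^ 2 * #A ^ 2 := by
  have hp₀ : 0 < p := hp.1
  have hpieces : (#(incidences A V) : ℝ) ≤ #(pieces A V) + #A := by
    exact_mod_cast hA.card_incidences_le_card_pieces
  have hcrossings : (#(crossingPairs (pieces A V)) : ℝ) ≤ #A ^ 2 := by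
    exact_mod_cast hA.card_crossingPairs_le
  have hpieces_le : p ^ 2 * #(pieces A V) ≤ p ^ 2 * (3 * #V / p + p ^ 2 * #A ^ 2) :=
    calc p ^ 2 * #(pieces A V)
        ≤ 3 * p * #V + p ^ 4 * #(crossingPairs (pieces A V)) :=
          hA.isDrawing_pieces.crossing_inequality hA.disjoint_endpoints hp₀.le hp.2
      _ ≤ 3 * p * #V + p ^ 4 * #A ^ 2 := by gcongr
      _ = p ^ 2 * (3 * #V / p + p ^ 2 * #A ^ 2) := by field_simp
  linarith [le_of_mul_le_mul_left hpieces_le (by positivity)]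

theorem IsPseudosegments.card_incidences_le (hA : IsPseudosegments A) :
    (#(incidences A V) : ℝ) ≤
      4 * (#V : ℝ) ^ (2 / 3 : ℝ) * (#A : ℝ) ^ (2 / 3 : ℝ) + 4 * #V + #A := by
  rcases V.eq_empty_or_nonempty with rfl | hV
  · simp [incidences]
  have cbrt_pow (x : ℝ) (hx : 0 ≤ x) :
      (x ^ (1 / 3 : ℝ)) ^ 3 = x ∧ (x ^ (1 / 3 : ℝ)) ^ 2 = x ^ (2 / 3 : ℝ) := by
    constructor <;> rw [← Real.rpow_natCast, ← Real.rpow_mul hx] <;> norm_num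
  have hV_pos : (0 : ℝ) < #V := by exact_mod_cast hV.card_pos
  obtain ⟨hv₃, hv₂⟩ := cbrt_pow #V hV_pos.le
  obtain ⟨ha₃, ha₂⟩ := cbrt_pow #A (by positivity)
  have hv_pos : 0 < (#V : ℝ) ^ (1 / 3 : ℝ) := by positivity
  have ha_nonneg : 0 ≤ (#A : ℝ) ^ (1 / 3 : ℝ) := by positivity
  have hbound := fun p hp => hA.card_incidences_le_of_mem_Ioc (V := V) (p := p) hp
  rw [← hv₂, ← ha₂]
  generalize (#V : ℝ) ^ (1 / 3 : ℝ) = v, (#A : ℝ) ^ (1 / 3 : ℝ) = a at *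
  rw [← hv₃, ← ha₃] at hbound ⊢
  rcases le_or_gt (a ^ 2) v with hav | hva
  · have hpow : (a ^ 3) ^ 2 ≤ v ^ 3 := by
      calc (a ^ 3) ^ 2 = (a ^ 2) ^ 3 := by ring
        _ ≤ v ^ 3 := by gcongr
    have : 0 ≤ v ^ 2 * a ^ 2 := by positivity
    linarith [hbound 1 (by simp)]
  · have ha_pos : 0 < a ^ 2 := hv_pos.trans hva
    -- This `p` balances the two terms: both `v ^ 3 / p` and `p ^ 2 * a ^ 6` are `v ^ 2 * a ^ 2`.
    have hbalance := hbound (v / a ^ 2) ⟨by positivity, (div_le_one ha_pos).mpr hva.le⟩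
    have hterm₁ : 3 * v ^ 3 / (v / a ^ 2) = 3 * (v ^ 2 * a ^ 2) := by field_simp
    have hterm₂ : (v / a ^ 2) ^ 2 * (a ^ 3) ^ 2 = v ^ 2 * a ^ 2 := by
      have : a ≠ 0 := by rintro rfl; simp at ha_pos
      field_simp
    rw [hterm₁, hterm₂] at hbalance
    have : 0 < v ^ 3 := by positivity
    linarith

end Incidence

end GraphArc

section HyperbolicCircles

open Finset GraphArc

/-- The square of the Euclidean half-width, at height `y`, of the hyperbolic circle of radius
`arcosh C` whose centre has height `b`. It is symmetric in `b` and `y`, and negative at the heights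
that the circle does not reach. -/
def sqHalfWidth (C b y : ℝ) : ℝ := 2 * C * b * y - b ^ 2 - y ^ 2

section Supermodular

variable {C b₁ b₂ y₁ y₂ : ℝ}

lemma sqHalfWidth_comm (C b y : ℝ) : sqHalfWidth C b y = sqHalfWidth C y b := by
  unfold sqHalfWidth
  ring

lemma add_mul_add_le_of_mul_le_mul (hb₁ : 0 < b₁) (hb : b₁ < b₂) (hy₁ : 0 < y₁)
    (hy : y₁ < y₂) (hq : 0 ≤ sqHalfWidth C b₂ y₁) (hyb : y₁ * y₂ ≤ b₁ * b₂) :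
    (b₁ + b₂) * (y₁ + y₂) ≤ 2 * C * (b₁ * b₂ + y₁ * y₂) := by
  have hb₂ : 0 < b₂ := hb₁.trans hb
  have hy₂ : 0 < y₂ := hy₁.trans hy
  have hy₁_sq : y₁ ^ 2 ≤ b₁ * b₂ := by nlinarith
  have hb₂_sq : y₁ * y₂ ≤ b₂ ^ 2 := by nlinarith
  have hC : b₂ ^ 2 + y₁ ^ 2 ≤ 2 * C * b₂ * y₁ := by unfold sqHalfWidth at hq; linarith
  refine le_of_mul_le_mul_left ?_ (mul_pos hb₂ hy₁)
  calc b₂ * y₁ * ((b₁ + b₂) * (y₁ + y₂))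
      ≤ b₂ * y₁ * ((b₁ + b₂) * (y₁ + y₂)) + (b₁ * b₂ - y₁ ^ 2) * (b₂ ^ 2 - y₁ * y₂) :=
        le_add_of_nonneg_right (mul_nonneg (sub_nonneg.mpr hy₁_sq) (sub_nonneg.mpr hb₂_sq))
    _ = (b₂ ^ 2 + y₁ ^ 2) * (b₁ * b₂ + y₁ * y₂) := by ring
    _ ≤ 2 * C * b₂ * y₁ * (b₁ * b₂ + y₁ * y₂) := by gcongr
    _ = b₂ * y₁ * (2 * C * (b₁ * b₂ + y₁ * y₂)) := by ring

lemma add_mul_add_le_of_sqHalfWidth_nonneg (hb₁ : 0 < b₁) (hb : b₁ < b₂) (hy₁ : 0 < y₁)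
    (hy : y₁ < y₂) (hq₁₂ : 0 ≤ sqHalfWidth C b₁ y₂) (hq₂₁ : 0 ≤ sqHalfWidth C b₂ y₁) :
    (b₁ + b₂) * (y₁ + y₂) ≤ 2 * C * (b₁ * b₂ + y₁ * y₂) := by
  rcases le_total (y₁ * y₂) (b₁ * b₂) with h | h
  · exact add_mul_add_le_of_mul_le_mul hb₁ hb hy₁ hy hq₂₁ h
  · rw [mul_comm, add_comm (b₁ * b₂)]
    exact add_mul_add_le_of_mul_le_mul hy₁ hy hb₁ hb (sqHalfWidth_comm C b₁ y₂ ▸ hq₁₂) h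

lemma sqrt_add_sqrt_lt_sqrt_add_sqrt {u v w z : ℝ} (hu : 0 ≤ u) (hv : 0 ≤ v) (hw : 0 ≤ w)
    (hz : 0 ≤ z) (hadd : u + v < w + z) (hmul : u * v ≤ w * z) : √u + √v < √w + √z := by
  have hsqrt_mul : √u * √v ≤ √w * √z := by
    rw [← Real.sqrt_mul hu, ← Real.sqrt_mul hw]
    exact Real.sqrt_le_sqrt hmul
  refine lt_of_pow_lt_pow_left₀ 2 (by positivity) ?_
  rw [add_sq, add_sq, Real.sq_sqrt hu, Real.sq_sqrt hv, Real.sq_sqrt hw, Real.sq_sqrt hz]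
  linarith

lemma sqrt_sqHalfWidth_strict_supermodular (hC : 0 < C) (hb₁ : 0 < b₁) (hb : b₁ < b₂)
    (hy₁ : 0 < y₁) (hy : y₁ < y₂)
    (hq₁₁ : 0 ≤ sqHalfWidth C b₁ y₁) (hq₁₂ : 0 ≤ sqHalfWidth C b₁ y₂)
    (hq₂₁ : 0 ≤ sqHalfWidth C b₂ y₁) (hq₂₂ : 0 ≤ sqHalfWidth C b₂ y₂) :
    √(sqHalfWidth C b₁ y₂) + √(sqHalfWidth C b₂ y₁) <
      √(sqHalfWidth C b₁ y₁) + √(sqHalfWidth C b₂ y₂) := by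
  have hΔ : 0 < (b₂ - b₁) * (y₂ - y₁) := mul_pos (sub_pos.mpr hb) (sub_pos.mpr hy)
  refine sqrt_add_sqrt_lt_sqrt_add_sqrt hq₁₂ hq₂₁ hq₁₁ hq₂₂ ?_ ?_
  · have hadd : sqHalfWidth C b₁ y₁ + sqHalfWidth C b₂ y₂ =
        sqHalfWidth C b₁ y₂ + sqHalfWidth C b₂ y₁ + 2 * C * ((b₂ - b₁) * (y₂ - y₁)) := by
      unfold sqHalfWidth
      ring
    rw [hadd]
    exact lt_add_of_pos_right _ (by positivity)
  · have hmul : sqHalfWidth C b₁ y₁ * sqHalfWidth C b₂ y₂ =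
        sqHalfWidth C b₁ y₂ * sqHalfWidth C b₂ y₁ + (b₂ - b₁) * (y₂ - y₁) *
          (2 * C * (b₁ * b₂ + y₁ * y₂) - (b₁ + b₂) * (y₁ + y₂)) := by
      unfold sqHalfWidth
      ring
    rw [hmul]
    have hfactor := add_mul_add_le_of_sqHalfWidth_nonneg hb₁ hb hy₁ hy hq₁₂ hq₂₁
    exact le_add_of_nonneg_right (mul_nonneg hΔ.le (sub_nonneg.mpr hfactor))

end Supermodular

/-- The coordinates of a point of `ℍ` with the imaginary part first, in which right half-circles
are graphs. -/
def imRe (p : ℍ) : ℝ × ℝ := (p.im, p.re)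

/-- The right half of the hyperbolic circle with centre `c` and radius `t ≥ 0`, as a graph over the
imaginary axis. -/
def rightHalfCircle (t : ℝ) (c : ℍ) : GraphArc where
  toFun := ⟨fun y => c.re + √(sqHalfWidth (Real.cosh t) c.im y), by unfold sqHalfWidth; fun_prop⟩
  left := c.im * Real.exp (-t)
  right := c.im * Real.exp t

lemma imRe_injective : Function.Injective imRe := fun _ _ h =>
  UpperHalfPlane.ext_re_im (congrArg Prod.snd h) (congrArg Prod.fst h)

lemma rightHalfCircle_injective (t : ℝ) : Function.Injective (rightHalfCircle t) := by
  intro c c' h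
  have him : c.im = c'.im :=
    mul_right_cancel₀ (Real.exp_ne_zero _) (congrArg GraphArc.left h)
  have happly : rightHalfCircle t c c.im = rightHalfCircle t c' c.im := by rw [h]
  refine UpperHalfPlane.ext_re_im (add_right_cancel (happly.trans ?_)) him
  rw [him]
  rfl

lemma re_add_sqrt_eq_of_mem_rightHalfCircle {t : ℝ} {c : ℍ} {v : ℝ × ℝ}
    (hv : v ∈ rightHalfCircle t c) :
    c.re + √(sqHalfWidth (Real.cosh t) c.im v.1) = v.2 := hv.2

lemma fst_pos_of_mem_rightHalfCircle {t : ℝ} {c : ℍ} {v : ℝ × ℝ}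
    (hv : v ∈ rightHalfCircle t c) : 0 < v.1 :=
  (mul_pos c.im_pos (Real.exp_pos _)).trans_le hv.1.1

lemma sqHalfWidth_nonneg_of_mem_rightHalfCircle {t : ℝ} {c : ℍ} {v : ℝ × ℝ}
    (hv : v ∈ rightHalfCircle t c) : 0 ≤ sqHalfWidth (Real.cosh t) c.im v.1 := by
  have hexp : Real.exp (-t) * Real.exp t = 1 := by
    rw [← Real.exp_add, neg_add_cancel, Real.exp_zero]
  calc 0 ≤ (v.1 - c.im * Real.exp (-t)) * (c.im * Real.exp t - v.1) :=
        mul_nonneg (sub_nonneg.mpr hv.1.1) (sub_nonneg.mpr hv.1.2)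
    _ = sqHalfWidth (Real.cosh t) c.im v.1 := by
        rw [sqHalfWidth, Real.cosh_eq]
        linear_combination -c.im ^ 2 * hexp

lemma imRe_mem_rightHalfCircle {p c : ℍ} (hre : c.re ≤ p.re) :
    imRe p ∈ rightHalfCircle (dist p c) c := by
  refine ⟨⟨?_, ?_⟩, ?_⟩
  · have := UpperHalfPlane.im_div_exp_dist_le c p
    rwa [div_eq_mul_inv, ← Real.exp_neg, dist_comm] at this
  · exact UpperHalfPlane.im_le_im_mul_exp_dist p c
  · have hsq : sqHalfWidth (Real.cosh (dist p c)) c.im p.im = (p.re - c.re) ^ 2 := by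
      have := p.im_ne_zero
      have := c.im_ne_zero
      rw [sqHalfWidth, UpperHalfPlane.cosh_dist']
      field_simp
      ring
    change c.re + √(sqHalfWidth _ c.im p.im) = p.re
    rw [hsq, Real.sqrt_sq (sub_nonneg.mpr hre), add_sub_cancel]

lemma fst_le_fst_of_mem_rightHalfCircle {t : ℝ} {c₁ c₂ : ℍ} (him : c₁.im < c₂.im) {v w : ℝ × ℝ}
    (hv₁ : v ∈ rightHalfCircle t c₁) (hv₂ : v ∈ rightHalfCircle t c₂)
    (hw₁ : w ∈ rightHalfCircle t c₁) (hw₂ : w ∈ rightHalfCircle t c₂) : w.1 ≤ v.1 := by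
  by_contra! hvw
  have hsupermod := sqrt_sqHalfWidth_strict_supermodular (Real.cosh_pos t) c₁.im_pos him
    (fst_pos_of_mem_rightHalfCircle hv₁) hvw
    (sqHalfWidth_nonneg_of_mem_rightHalfCircle hv₁) (sqHalfWidth_nonneg_of_mem_rightHalfCircle hw₁)
    (sqHalfWidth_nonneg_of_mem_rightHalfCircle hv₂) (sqHalfWidth_nonneg_of_mem_rightHalfCircle hw₂)
  linarith [re_add_sqrt_eq_of_mem_rightHalfCircle hv₁, re_add_sqrt_eq_of_mem_rightHalfCircle hv₂,
    re_add_sqrt_eq_of_mem_rightHalfCircle hw₁, re_add_sqrt_eq_of_mem_rightHalfCircle hw₂]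

lemma isPseudosegments_image_rightHalfCircle [DecidableEq GraphArc] (Q : Finset ℍ) (t : ℝ) :
    IsPseudosegments (Q.image (rightHalfCircle t)) := by
  rintro a ha b hb hab v ⟨hva, hvb⟩ w ⟨hwa, hwb⟩
  obtain ⟨c₁, -, rfl⟩ := mem_image.mp (mem_coe.mp ha)
  obtain ⟨c₂, -, rfl⟩ := mem_image.mp (mem_coe.mp hb)
  have hfst : v.1 = w.1 := by
    rcases lt_trichotomy c₁.im c₂.im with him | him | him
    · exact le_antisymm (fst_le_fst_of_mem_rightHalfCircle him hwa hwb hva hvb)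
        (fst_le_fst_of_mem_rightHalfCircle him hva hvb hwa hwb)
    · refine absurd (congrArg _ (UpperHalfPlane.ext_re_im ?_ him)) hab
      have hre := re_add_sqrt_eq_of_mem_rightHalfCircle hva
      rw [← re_add_sqrt_eq_of_mem_rightHalfCircle hvb, him] at hre
      exact add_right_cancel hre
    · exact le_antisymm (fst_le_fst_of_mem_rightHalfCircle him hwb hwa hvb hva)
        (fst_le_fst_of_mem_rightHalfCircle him hvb hva hwb hwa)
  exact Prod.ext hfst (hva.2.symm.trans ((congrArg _ hfst).trans hwa.2))

open Classical in
lemma card_filter_dist_eq_re_le (Q : Finset ℍ) (t : ℝ) :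
    (#{z ∈ Q ×ˢ Q | dist z.1 z.2 = t ∧ z.2.re ≤ z.1.re} : ℝ) ≤ 9 * (#Q : ℝ) ^ (4 / 3 : ℝ) := by
  let A : Finset GraphArc := Q.image (rightHalfCircle t)
  let V : Finset (ℝ × ℝ) := Q.image imRe
  have hA : (#A : ℝ) ≤ #Q := by exact_mod_cast card_image_le
  have hV : (#V : ℝ) ≤ #Q := by exact_mod_cast card_image_le
  have hcard : #{z ∈ Q ×ˢ Q | dist z.1 z.2 = t ∧ z.2.re ≤ z.1.re} ≤ #(incidences A V) := by
    refine card_le_card_of_injOn (fun z => (rightHalfCircle t z.2, imRe z.1)) ?_ ?_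
    · intro z hz
      obtain ⟨hz, hdist, hre⟩ := mem_filter.mp hz
      obtain ⟨hz₁, hz₂⟩ := mem_product.mp hz
      exact mem_filter.mpr ⟨mem_product.mpr ⟨mem_image_of_mem _ hz₂, mem_image_of_mem _ hz₁⟩,
        hdist ▸ imRe_mem_rightHalfCircle hre⟩
    · intro z _ z' _ h
      exact Prod.ext (imRe_injective (congrArg Prod.snd h))
        (rightHalfCircle_injective t (congrArg Prod.fst h))
  have hpow : (#Q : ℝ) ^ (2 / 3 : ℝ) * (#Q : ℝ) ^ (2 / 3 : ℝ) = (#Q : ℝ) ^ (4 / 3 : ℝ) := by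
    rw [← Real.rpow_add_of_nonneg (by positivity) (by norm_num) (by norm_num)]
    norm_num
  have hlinear : (#Q : ℝ) ≤ (#Q : ℝ) ^ (4 / 3 : ℝ) := by
    rcases Q.eq_empty_or_nonempty with rfl | hQ
    · simp
    · exact Real.self_le_rpow_of_one_le (by exact_mod_cast hQ.card_pos) (by norm_num)
  calc (#{z ∈ Q ×ˢ Q | dist z.1 z.2 = t ∧ z.2.re ≤ z.1.re} : ℝ)
      ≤ #(incidences A V) := by exact_mod_cast hcard
    _ ≤ 4 * (#V : ℝ) ^ (2 / 3 : ℝ) * (#A : ℝ) ^ (2 / 3 : ℝ) + 4 * #V + #A :=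
        (isPseudosegments_image_rightHalfCircle Q t).card_incidences_le
    _ ≤ 4 * (#Q : ℝ) ^ (2 / 3 : ℝ) * (#Q : ℝ) ^ (2 / 3 : ℝ) + 4 * #Q + #Q := by gcongr
    _ ≤ 9 * (#Q : ℝ) ^ (4 / 3 : ℝ) := by rw [mul_assoc, hpow]; linarith

open Classical in
theorem card_filter_dist_eq_le (Q : Finset ℍ) (t : ℝ) :
    (#{z ∈ Q ×ˢ Q | dist z.1 z.2 = t} : ℝ) ≤ 18 * (#Q : ℝ) ^ (4 / 3 : ℝ) := by
  have hswap : #{z ∈ Q ×ˢ Q | dist z.1 z.2 = t ∧ ¬ z.2.re ≤ z.1.re} ≤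
      #{z ∈ Q ×ˢ Q | dist z.1 z.2 = t ∧ z.2.re ≤ z.1.re} := by
    refine card_le_card_of_injOn Prod.swap (fun z hz => ?_) Prod.swap_injective.injOn
    obtain ⟨hz, hdist, hre⟩ := mem_filter.mp hz
    exact mem_filter.mpr ⟨mem_product.mpr (mem_product.mp hz).symm,
      (dist_comm _ _).trans hdist, (not_le.mp hre).le⟩
  rw [← card_filter_add_card_filter_not (s := {z ∈ Q ×ˢ Q | dist z.1 z.2 = t})
    fun z => z.2.re ≤ z.1.re, filter_filter, filter_filter]
  have hhalf := card_filter_dist_eq_re_le Q t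
  have hswap' : (#{z ∈ Q ×ˢ Q | dist z.1 z.2 = t ∧ ¬ z.2.re ≤ z.1.re} : ℝ) ≤
      #{z ∈ Q ×ˢ Q | dist z.1 z.2 = t ∧ z.2.re ≤ z.1.re} := by exact_mod_cast hswap
  push_cast
  linarith

end HyperbolicCircles

section Layering

open Finset
open scoped Pointwise

lemma sum_eq_sum_Icc_card_filter_le {ι : Type*} {Y : Finset ι} {f : ι → ℕ} {K : ℕ}
    (hf : ∀ y ∈ Y, f y ≤ K) : ∑ y ∈ Y, f y = ∑ s ∈ Icc 1 K, #{y ∈ Y | s ≤ f y} := by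
  simp_rw [card_filter]
  rw [sum_comm]
  refine sum_congr rfl fun y hy => ?_
  have hlevels : {s ∈ Icc 1 K | s ≤ f y} = Icc 1 (f y) := by
    ext s
    have := hf y hy
    simp only [mem_filter, mem_Icc]
    omega
  rw [← card_filter, hlevels, Nat.card_Icc, add_tsub_cancel_right]

variable {G α : Type*} [DecidableEq α] [Group G] [MulAction G α]

/-- The points of `P` that some element of `S` moves to `x`. -/
def smulFiber (S : Finset G) (P : Finset α) (x : α) : Finset α :=
  {q ∈ P | ∃ γ ∈ S, γ • q = x}

/-- The translates of points of `P` by elements of `S` that come from at least `s` points of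
`P`. -/
def richTranslates (S : Finset G) (P : Finset α) (s : ℕ) : Finset α :=
  {x ∈ S • P | s ≤ #(smulFiber S P x)}

variable (S : Finset G) (P : Finset α)

lemma card_smulFiber_le (x : α) : #(smulFiber S P x) ≤ #S := by
  have hsub : smulFiber S P x ⊆ S.image fun γ => γ⁻¹ • x := by
    intro q hq
    obtain ⟨-, γ, hγ, rfl⟩ := mem_filter.mp hq
    exact mem_image.mpr ⟨γ, hγ, inv_smul_smul γ q⟩
  exact (card_le_card hsub).trans card_image_le

lemma card_richTranslates_mul_le (s : ℕ) : #(richTranslates S P s) * s ≤ #P * #S := by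
  refine card_mul_le_card_mul (fun x q => ∃ γ ∈ S, γ • q = x)
    (fun x hx => (mem_filter.mp hx).2) fun q _ => ?_
  have hsub : (richTranslates S P s).bipartiteBelow (fun x q => ∃ γ ∈ S, γ • q = x) q ⊆
      S.image (· • q) := fun x hx => mem_image.mpr (mem_filter.mp hx).2
  exact (card_le_card hsub).trans card_image_le

lemma card_union_richTranslates_le {s : ℕ} (hs : s ∈ Icc 1 #S) :
    (#(P ∪ richTranslates S P s) : ℝ) ≤ 2 * (#S * #P) / s := by
  obtain ⟨hs_pos, hsS⟩ := mem_Icc.mp hs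
  rw [le_div_iff₀ (by exact_mod_cast hs_pos)]
  have hcard : #(P ∪ richTranslates S P s) * s ≤ 2 * (#S * #P) :=
    calc #(P ∪ richTranslates S P s) * s
        ≤ (#P + #(richTranslates S P s)) * s := by grw [card_union_le]
      _ = #P * s + #(richTranslates S P s) * s := add_mul _ _ _
      _ ≤ #P * #S + #P * #S := by grw [card_richTranslates_mul_le, hsS]
      _ = 2 * (#S * #P) := by ring
  exact_mod_cast hcard

variable (r : α → α → Prop) [DecidableRel r]

open Classical in
lemma card_filter_exists_smul_le_sum_card_smulFiber :
    #{z ∈ P ×ˢ P | ∃ γ ∈ S, r z.1 (γ • z.2)} ≤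
      ∑ z ∈ P ×ˢ (S • P) with r z.1 z.2, #(smulFiber S P z.2) := by
  have hcover : {z ∈ P ×ˢ P | ∃ γ ∈ S, r z.1 (γ • z.2)} ⊆
      ({z ∈ P ×ˢ (S • P) | r z.1 z.2}).biUnion fun z => {z.1} ×ˢ smulFiber S P z.2 := by
    intro z hz
    obtain ⟨hz, γ, hγ, hr⟩ := mem_filter.mp hz
    obtain ⟨hz₁, hz₂⟩ := mem_product.mp hz
    refine mem_biUnion.mpr ⟨(z.1, γ • z.2), mem_filter.mpr
      ⟨mem_product.mpr ⟨hz₁, smul_mem_smul hγ hz₂⟩, hr⟩, mem_product.mpr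
      ⟨mem_singleton_self z.1, mem_filter.mpr ⟨hz₂, γ, hγ, rfl⟩⟩⟩
  grw [card_le_card hcover, card_biUnion_le]
  simp

open Classical in
lemma card_filter_exists_smul_le_sum_layers :
    #{z ∈ P ×ˢ P | ∃ γ ∈ S, r z.1 (γ • z.2)} ≤ ∑ s ∈ Icc 1 #S,
      #{z ∈ (P ∪ richTranslates S P s) ×ˢ (P ∪ richTranslates S P s) | r z.1 z.2} := by
  grw [card_filter_exists_smul_le_sum_card_smulFiber,
    sum_eq_sum_Icc_card_filter_le fun z _ => card_smulFiber_le S P z.2]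
  refine sum_le_sum fun s _ => card_le_card fun z hz => ?_
  simp only [mem_filter, mem_product, mem_union, richTranslates] at hz ⊢
  tauto

omit [DecidableEq α] in
open Classical in
theorem card_filter_exists_smul_le {A e : ℝ} (hA : 0 ≤ A) (he : 1 < e)
    (hr : ∀ Q : Finset α, (#{z ∈ Q ×ˢ Q | r z.1 z.2} : ℝ) ≤ A * (#Q : ℝ) ^ e) :
    (#{z ∈ P ×ˢ P | ∃ γ ∈ S, r z.1 (γ • z.2)} : ℝ) ≤
      A * 2 ^ e * (∑' s : ℕ, ((s : ℝ) ^ e)⁻¹) * (#S * #P : ℝ) ^ e := by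
  let layer (s : ℕ) : Finset α := P ∪ richTranslates S P s
  have hlayer : ∀ s ∈ Icc 1 #S, (#{z ∈ layer s ×ˢ layer s | r z.1 z.2} : ℝ) ≤
      A * 2 ^ e * (#S * #P : ℝ) ^ e * ((s : ℝ) ^ e)⁻¹ := by
    intro s hs
    calc (#{z ∈ layer s ×ˢ layer s | r z.1 z.2} : ℝ)
        ≤ A * (#(layer s) : ℝ) ^ e := hr _
      _ ≤ A * (2 * (#S * #P) / s) ^ e := by
          gcongr
          exact card_union_richTranslates_le S P hs
      _ = A * 2 ^ e * (#S * #P : ℝ) ^ e * ((s : ℝ) ^ e)⁻¹ := by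
          rw [Real.div_rpow (by positivity) (by positivity),
            Real.mul_rpow (by positivity) (by positivity)]
          ring
  calc (#{z ∈ P ×ˢ P | ∃ γ ∈ S, r z.1 (γ • z.2)} : ℝ)
      ≤ ∑ s ∈ Icc 1 #S, (#{z ∈ layer s ×ˢ layer s | r z.1 z.2} : ℝ) := by
        exact_mod_cast card_filter_exists_smul_le_sum_layers S P r
    _ ≤ ∑ s ∈ Icc 1 #S, A * 2 ^ e * (#S * #P : ℝ) ^ e * ((s : ℝ) ^ e)⁻¹ := sum_le_sum hlayer
    _ = A * 2 ^ e * (#S * #P : ℝ) ^ e * ∑ s ∈ Icc 1 #S, ((s : ℝ) ^ e)⁻¹ := by rw [mul_sum]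
    _ ≤ A * 2 ^ e * (#S * #P : ℝ) ^ e * ∑' s : ℕ, ((s : ℝ) ^ e)⁻¹ := by
        gcongr
        exact (Real.summable_nat_rpow_inv.mpr he).sum_le_tsum _ fun s _ => by positivity
    _ = A * 2 ^ e * (∑' s : ℕ, ((s : ℝ) ^ e)⁻¹) * (#S * #P : ℝ) ^ e := by ring

end Layering

theorem unit_distances_hyperbolic_surface_general :
    ∃ C : ℝ, 0 < C ∧ ∀ (P : Finset ℍ) (S : Finset SL(2, ℝ)) (t : ℝ),
      ({x : ℍ × ℍ | x.1 ∈ P ∧ x.2 ∈ P ∧ ∃ γ ∈ S, dist x.1 (γ • x.2) = t}.ncard : ℝ) ≤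
        C * ((S.card : ℝ) * (P.card : ℝ)) ^ ((4 : ℝ) / 3) := by
  classical
  have hsum_pos : 0 < ∑' s : ℕ, ((s : ℝ) ^ (4 / 3 : ℝ))⁻¹ :=
    (Real.summable_nat_rpow_inv.mpr (by norm_num)).tsum_pos (fun s => by positivity) 1 (by simp)
  refine ⟨18 * 2 ^ (4 / 3 : ℝ) * ∑' s : ℕ, ((s : ℝ) ^ (4 / 3 : ℝ))⁻¹, by positivity,
    fun P S t => ?_⟩
  have hcard := card_filter_exists_smul_le S P (fun p q => dist p q = t) (by norm_num)
    (by norm_num) fun Q => card_filter_dist_eq_le Q t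
  rw [← Set.ncard_coe_finset] at hcard
  simpa [and_assoc] using hcard

/-- There is an absolute constant `C > 0` such that for any subgroup `Γ ≤ SL(2,ℝ)`,
any finite set `P` of `N` points of `ℍ²` with a geodesic cover `Γ₀ ⊆ Γ` of cardinality
`K`, and any `t > 0`, the number of ordered pairs of points of `P` at quotient distance
exactly `t` is at most `C · (K·N)^(4/3)`. -/
theorem unit_distances_hyperbolic_surface :
    ∃ C : ℝ, 0 < C ∧
      ∀ (Γ : Subgroup SL(2, ℝ)) (P : Finset ℍ) (Γ₀ : Finset SL(2, ℝ))
        (hne : Γ₀.Nonempty),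
        (↑Γ₀ : Set SL(2, ℝ)) ⊆ (↑Γ : Set SL(2, ℝ)) →
        (∀ p ∈ P, ∀ q ∈ P, quotDist Γ p q = Γ₀.inf' hne fun γ => dist p (γ • q)) →
        ∀ t : ℝ, 0 < t →
          ({x : ℍ × ℍ | x.1 ∈ P ∧ x.2 ∈ P ∧ quotDist Γ x.1 x.2 = t}.ncard : ℝ) ≤
            C * ((Γ₀.card : ℝ) * (P.card : ℝ)) ^ ((4 : ℝ) / 3) := by
  obtain ⟨C, hC, hbound⟩ := unit_distances_hyperbolic_surface_general
  refine ⟨C, hC, fun Γ P Γ₀ hne _ hcover t _ => le_trans ?_ (hbound P Γ₀ t)⟩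
  have hfinite : {x : ℍ × ℍ | x.1 ∈ P ∧ x.2 ∈ P ∧ ∃ γ ∈ Γ₀, dist x.1 (γ • x.2) = t}.Finite :=
    (P ×ˢ P).finite_toSet.subset fun x hx => Finset.mem_product.mpr ⟨hx.1, hx.2.1⟩
  refine Nat.cast_le.mpr (Set.ncard_le_ncard (fun x ⟨hp, hq, hx⟩ => ⟨hp, hq, ?_⟩) hfinite)
  obtain ⟨γ, hγ, hmin⟩ := Γ₀.exists_mem_eq_inf' hne fun γ => dist x.1 (γ • x.2)
  exact ⟨γ, hγ, hmin.symm.trans ((hcover _ hp _ hq).symm.trans hx)⟩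

end
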